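/- arXiv:2312.02596 — 2 statements merged into one kernel-verified Lean document; each statement's English description precedes it below -/
import Mathlib

section
/- Let G be a real m×p matrix, G* a real m×q matrix, Y ∈ ℝ^m, e ∈ ℝ^m the all-ones vector, ε1 ∈ ℝ, and c1, c2, c3 > 0. Suppose v1 ∈ ℝ^p, v1* ∈ ℝ^q, and α ∈ ℝ^m satisfy: (i) c1·v1 − Gᵀ(Y − G v1) − Gᵀα = 0; (ii) c2·v1* + c3·(G*)ᵀe + (G*)ᵀα = 0; (iii) Y − G v1 + ε1 e + G* v1* = 0. If the m×m matrix A = G Gᵀ + (c1/c2)·G*(G*)ᵀ + (1/c2)·G Gᵀ G*(G*)ᵀ is invertible, then α = A⁻¹ ( c1·Y + c1·ε1·e − (c1·c3/c2)·G*(G*)ᵀ e + ε1·G Gᵀ e − (c3/c2)·G Gᵀ G*(G*)ᵀ e ). -/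
open Matrix

/-- Closed form for the Lagrange multiplier `α` of the first primal problem of
LSTSVR-PI from the KKT conditions. -/
theorem lstsvr_pi_alpha_closed_form {m p q : ℕ}
    (G : Matrix (Fin m) (Fin p) ℝ) (Gs : Matrix (Fin m) (Fin q) ℝ)
    (Y : Fin m → ℝ) (e : Fin m → ℝ) (he : e = fun _ => 1) (ε1 : ℝ)
    (c1 c2 c3 : ℝ) (hc1 : 0 < c1) (hc2 : 0 < c2) (hc3 : 0 < c3)
    (v1 : Fin p → ℝ) (v1s : Fin q → ℝ) (α : Fin m → ℝ)
    (h1 : c1 • v1 - Gᵀ.mulVec (Y - G.mulVec v1) - Gᵀ.mulVec α = 0)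
    (h2 : c2 • v1s + c3 • Gsᵀ.mulVec e + Gsᵀ.mulVec α = 0)
    (h3 : Y - G.mulVec v1 + ε1 • e + Gs.mulVec v1s = 0)
    (A : Matrix (Fin m) (Fin m) ℝ)
    (hA : A = G * Gᵀ + (c1 / c2) • (Gs * Gsᵀ) + (1 / c2) • (G * Gᵀ * (Gs * Gsᵀ)))
    (hAinv : IsUnit A) :
    α = A⁻¹.mulVec (c1 • Y + (c1 * ε1) • e - (c1 * c3 / c2) • (Gs * Gsᵀ).mulVec e
        + ε1 • (G * Gᵀ).mulVec e - (c3 / c2) • (G * Gᵀ * (Gs * Gsᵀ)).mulVec e) := by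
  have hc : c2 ≠ 0 := hc2.ne'
  have key : A.mulVec α = c1 • Y + (c1 * ε1) • e - (c1 * c3 / c2) • (Gs * Gsᵀ).mulVec e
        + ε1 • (G * Gᵀ).mulVec e - (c3 / c2) • (G * Gᵀ * (Gs * Gsᵀ)).mulVec e := by
    have k1 := congrArg G.mulVec h1
    have k2 := congrArg Gs.mulVec h2
    have k3 := congrArg (G * Gᵀ).mulVec h3
    have k4 := congrArg (G * Gᵀ).mulVec k2
    simp only [mulVec_sub, mulVec_add, mulVec_smul, mulVec_mulVec, mulVec_zero] at k1 k2 k3 k4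
    subst hA
    simp only [add_mulVec, smul_mulVec]
    simp only [Matrix.mul_assoc] at k1 k2 k3 k4 ⊢
    ext i
    have k1 := congrFun k1 i
    have k2 := congrFun k2 i
    have k3 := congrFun k3 i
    have k4 := congrFun k4 i
    have k5 := congrFun h3 i
    simp only [Pi.add_apply, Pi.sub_apply, Pi.smul_apply, smul_eq_mul, Pi.zero_apply] at k1 k2 k3 k4 k5 ⊢
    field_simp
    linear_combination c1 * k2 + k4 - c2 * k1 - c2 * k3 - c1 * c2 * k5
  rw [← key, mulVec_mulVec, Matrix.nonsing_inv_mul _ ((Matrix.isUnit_iff_isUnit_det A).1 hAinv), one_mulVec]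
end

section
/- Let G be a real m×p matrix, G* a real m×q matrix, Y ∈ ℝ^m, e ∈ ℝ^m the all-ones vector, ε2 ∈ ℝ, and c4, c5, c6 > 0. Suppose v2 ∈ ℝ^p, v2* ∈ ℝ^q, and β ∈ ℝ^m satisfy: (i) c4·v2 + Gᵀ(G v2 − Y) + Gᵀβ = 0; (ii) c5·v2* + c6·(G*)ᵀe + (G*)ᵀβ = 0; (iii) G v2 − Y + ε2 e + G* v2* = 0. If the m×m matrix A = G Gᵀ + (c4/c5)·G*(G*)ᵀ + (1/c5)·G Gᵀ G*(G*)ᵀ is invertible, then β = A⁻¹ ( −c4·Y + c4·ε2·e − (c4·c6/c5)·G*(G*)ᵀ e + ε2·G Gᵀ e − (c6/c5)·G Gᵀ G*(G*)ᵀ e ). -/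
open Matrix

/-- Closed form for the Lagrange multiplier `β` of the second primal problem of
LSTSVR-PI from the KKT conditions. -/
theorem lstsvr_pi_beta_closed_form {m p q : ℕ}
    (G : Matrix (Fin m) (Fin p) ℝ) (Gs : Matrix (Fin m) (Fin q) ℝ)
    (Y : Fin m → ℝ) (e : Fin m → ℝ) (he : e = fun _ => 1) (ε2 : ℝ)
    (c4 c5 c6 : ℝ) (hc4 : 0 < c4) (hc5 : 0 < c5) (hc6 : 0 < c6)
    (v2 : Fin p → ℝ) (v2s : Fin q → ℝ) (β : Fin m → ℝ)
    (h1 : c4 • v2 + Gᵀ.mulVec (G.mulVec v2 - Y) + Gᵀ.mulVec β = 0)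
    (h2 : c5 • v2s + c6 • Gsᵀ.mulVec e + Gsᵀ.mulVec β = 0)
    (h3 : G.mulVec v2 - Y + ε2 • e + Gs.mulVec v2s = 0)
    (A : Matrix (Fin m) (Fin m) ℝ)
    (hA : A = G * Gᵀ + (c4 / c5) • (Gs * Gsᵀ) + (1 / c5) • (G * Gᵀ * (Gs * Gsᵀ)))
    (hAinv : IsUnit A) :
    β = A⁻¹.mulVec ((-c4) • Y + (c4 * ε2) • e - (c4 * c6 / c5) • (Gs * Gsᵀ).mulVec e
        + ε2 • (G * Gᵀ).mulVec e - (c6 / c5) • (G * Gᵀ * (Gs * Gsᵀ)).mulVec e) := by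
  have hdet : IsUnit A.det := (Matrix.isUnit_iff_isUnit_det A).mp hAinv
  have key : A.mulVec β = ((-c4) • Y + (c4 * ε2) • e - (c4 * c6 / c5) • (Gs * Gsᵀ).mulVec e
        + ε2 • (G * Gᵀ).mulVec e - (c6 / c5) • (G * Gᵀ * (Gs * Gsᵀ)).mulVec e) := by
    have k1 := congrArg (fun x => G.mulVec x) h1
    have k2 := congrArg (fun x => Gs.mulVec x) h2
    have k4 := congrArg (fun x => (G * Gᵀ).mulVec x) h3
    have k5 := congrArg (fun x => (G * Gᵀ).mulVec (Gs.mulVec x)) h2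
    simp only [Matrix.mulVec_add, Matrix.mulVec_sub, Matrix.mulVec_smul, Matrix.mulVec_mulVec,
      Matrix.mulVec_zero, Matrix.mul_assoc] at k1 k2 k4 k5
    rw [hA]
    simp only [Matrix.add_mulVec, Matrix.smul_mulVec, Matrix.mul_assoc]
    funext i
    have l1 := congrFun k1 i
    have l2 := congrFun k2 i
    have l3 := congrFun h3 i
    have l4 := congrFun k4 i
    have l5 := congrFun k5 i
    simp only [Pi.add_apply, Pi.sub_apply, Pi.smul_apply, smul_eq_mul, Pi.zero_apply]
      at l1 l2 l3 l4 l5 ⊢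
    have hc : c5 ≠ 0 := hc5.ne'
    linear_combination (norm := (field_simp; ring)) l1 - c4 * l3 - l4 + c4 / c5 * l2 + 1 / c5 * l5
  rw [← key, Matrix.mulVec_mulVec, Matrix.nonsing_inv_mul A hdet, Matrix.one_mulVec]
end
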